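/- Let $1 < p < \infty$ and let $W$ be a matrix $A_p$ weight on $\mathbb{R}^d$. There is a constant $c = c(n,d,p) > 0$ such that for $s := 1 + \frac{1}{c[W]_{A_p}}$ and every cube $Q$, $(\frac{1}{|Q|}\int_Q \|W^{1/p}(x) V_{Q,p}\|^{sp} dx)^{1/s} \le C [W]_{A_p}$, where $V_{Q,p}$ is the reducing operator of $Q$ and $C = C(n,d,p)$. -/

import Mathlib

/-!
For a vector `u`, the scalar weight `w = |W^{1/p} u| ^ p` satisfies `w(x) ≤ ‖W^{1/p}(x) W^{-1/p}(y)‖ ^ p w(y)`,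
so it is in scalar `A_p` with constant at most `A` on every subcube of `Q` (`scalar_Ap`). By
Chebyshev's inequality for the dual weight `w ^ (-1 / (p - 1))`, on each subcube `w` is at least
`β ≃ 1 / A` times its average on half of the subcube (`half_measure_of_Ap`). A Calderón–Zygmund
decomposition at height `t > ⨍_Q w` turns this into `w({w > t}) ≤ 2 ^ (d + 1) t |{w > β t}|`
(`exists_stopping`, `mass_superlevel_le`). Integrating against `t ^ (δ - 1)` gives
`∫ w ^ (1 + δ) ≤ (⨍ w) ^ δ ∫ w + δ 2 ^ (d + 1) β ^ (-1 - δ) ∫ w ^ (1 + δ)`, and for `δ = 1 / (c A)`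
the last coefficient is at most `1 / 2` since `A ^ (1 / A)` is bounded (`reverse_holder`,
`coefficient_small`).

For the theorem, `‖W^{1/p} V‖` is bounded by the sum of its columns, each handled by the
scalar inequality with `u = V e_i`. What remains is `⨍ ‖W^{1/p} V‖ ^ p ≤ c₂ ^ p A`, which holds because
`‖W^{1/p}(x) V‖ = ‖V W^{1/p}(x)‖` is controlled by the inner average in the matrix `A_p` condition
(`matOpNorm_mul_reducing_le`).

All averages are Bochner integrals, with value `0` for non-integrable functions. The existence of
`V` forces `‖W^{-1/p}‖ ^ p'` to be integrable on `Q` (`integrableOn_of_reducing`). If `‖W^{1/p} V‖ ^ (s p)`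
is not integrable the claim is trivial; otherwise `‖W^{1/p}‖ ^ p` is integrable as well, the `A_p`
condition on subcubes of `Q` is a genuine bound (`integrableOn_outer`), and the last term above is
finite and can be absorbed.
-/

open MeasureTheory ENNReal Set
open scoped ComplexOrder

noncomputable section

/-- Euclidean space `ℝ^d` as a pi type (with Lebesgue measure `volume`). -/
abbrev Rd (d : ℕ) := Fin d → ℝ

/-- A (half-open, axis-parallel) cube in `ℝ^d`. -/
def IsCube {d : ℕ} (Q : Set (Rd d)) : Prop :=
  ∃ (a : Rd d) (l : ℝ), 0 < l ∧ Q = Set.univ.pi fun i => Set.Ico (a i) (a i + l)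

/-- The dyadic subcubes of the cube with lower-left corner `a` and sidelength `l`
(obtained by repeated subdivision into `2^d` congruent subcubes). -/
def dyadicSubcubesOf {d : ℕ} (a : Rd d) (l : ℝ) : Set (Set (Rd d)) :=
  {R | ∃ (k : ℕ) (m : Fin d → ℕ), (∀ i, m i < 2 ^ k) ∧
    R = Set.univ.pi fun i => Set.Ico (a i + l * m i / 2 ^ k) (a i + l * (m i + 1) / 2 ^ k)}

/-- An `η`-sparse family of cubes: for each `Q` in the family, the union of its proper
subcubes belonging to the family has measure at most `(1 - η)|Q|`. -/
def IsSparse {d : ℕ} (η : ℝ) (S : Set (Set (Rd d))) : Prop :=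
  ∀ Q ∈ S, volume (⋃ Q' ∈ {Q' ∈ S | Q' ⊂ Q}, Q') ≤ ENNReal.ofReal (1 - η) * volume Q

/-- A dyadic lattice in `ℝ^d`. -/
structure DyadicLattice (d : ℕ) where
  cubes : Set (Set (Rd d))
  isCube : ∀ Q ∈ cubes, IsCube Q
  descendants_mem : ∀ (a : Rd d) (l : ℝ), 0 < l →
    (Set.univ.pi fun i => Set.Ico (a i) (a i + l)) ∈ cubes →
    dyadicSubcubesOf a l ⊆ cubes
  common_ancestor : ∀ Q ∈ cubes, ∀ Q' ∈ cubes, ∃ (a : Rd d) (l : ℝ), 0 < l ∧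
    (Set.univ.pi fun i => Set.Ico (a i) (a i + l)) ∈ cubes ∧
    Q ∈ dyadicSubcubesOf a l ∧ Q' ∈ dyadicSubcubesOf a l
  covers_compact : ∀ K : Set (Rd d), IsCompact K → ∃ Q ∈ cubes, K ⊆ Q

/-- A weight: a measurable, (a.e.) positive function. -/
def IsWeightOn {X : Type*} [MeasurableSpace X] (w : X → ℝ) : Prop :=
  Measurable w ∧ ∀ x, 0 < w x

/-- `A ≥ [w]_{A_p}`: the Muckenhoupt `A_p` characteristic of `w` is at most `A`. -/
def ApBound {d : ℕ} (p : ℝ) (w : Rd d → ℝ) (A : ℝ) : Prop :=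
  ∀ Q : Set (Rd d), IsCube Q →
    (⨍ x in Q, w x) * (⨍ x in Q, w x ^ (-(1 / (p - 1)))) ^ (p - 1) ≤ A

/-- The weak `L^p` quasinorm of a real-valued function w.r.t. a measure `μ`. -/
def weakNorm {X : Type*} [MeasurableSpace X] (μ : Measure X) (p : ℝ) (f : X → ℝ) : ℝ≥0∞ :=
  ⨆ (α : ℝ) (_ : 0 < α), ENNReal.ofReal α * μ {x | α < |f x|} ^ (1 / p)

/-- The weak `L^p` quasinorm of an `ℝ≥0∞`-valued function w.r.t. a measure `μ`. -/
def weakNormE {X : Type*} [MeasurableSpace X] (μ : Measure X) (p : ℝ) (g : X → ℝ≥0∞) : ℝ≥0∞ :=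
  ⨆ (α : ℝ) (_ : 0 < α), ENNReal.ofReal α * μ {x | ENNReal.ofReal α < g x} ^ (1 / p)

/-- `n × n` complex matrices. -/
abbrev Mat (n : ℕ) := Matrix (Fin n) (Fin n) ℂ

/-- The operator (spectral) norm of a matrix, acting on `ℓ²`. -/
def matOpNorm {n : ℕ} (M : Mat n) : ℝ := ‖Matrix.toEuclideanCLM (𝕜 := ℂ) M‖

/-- Action of a matrix on a vector of `ℂ^n` (with the Euclidean norm). -/
def mvec {n : ℕ} (M : Mat n) (v : EuclideanSpace ℂ (Fin n)) : EuclideanSpace ℂ (Fin n) :=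
  (WithLp.equiv 2 _).symm (M.mulVec ((WithLp.equiv 2 _) v))

/-- `Wp` and `Wpinv` represent `W^{1/p}` and `W^{-1/p}` for a matrix weight `W`:
they are measurable, pointwise self-adjoint, positive definite and mutually inverse. -/
def IsMatrixWeightPair {d n : ℕ} (Wp Wpinv : Rd d → Mat n) : Prop :=
  (∀ x, (Wp x).IsHermitian) ∧ (∀ x, (Wp x).PosDef) ∧
  (∀ x, (Wpinv x).IsHermitian) ∧ (∀ x, (Wpinv x).PosDef) ∧
  (∀ x, Wp x * Wpinv x = 1) ∧
  (∀ i j, Measurable fun x => Wp x i j) ∧ (∀ i j, Measurable fun x => Wpinv x i j)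

/-- `A ≥ [W]_{A_p}` for the matrix weight `W` (given via `W^{1/p}` and `W^{-1/p}`):
`⨍_Q (⨍_Q ‖W^{1/p}(x) W^{-1/p}(y)‖^{p'} dy)^{p/p'} dx ≤ A` for every cube `Q`. -/
def MatrixApBound {d n : ℕ} (p : ℝ) (Wp Wpinv : Rd d → Mat n) (A : ℝ) : Prop :=
  ∀ Q : Set (Rd d), IsCube Q →
    (⨍ x in Q, (⨍ y in Q, matOpNorm (Wp x * Wpinv y) ^ (p / (p - 1))) ^ (p - 1)) ≤ A

/-- `V` is a reducing operator for the cube `Q` and the matrix weight `W` (given via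
`W^{-1/p}`), with equivalence constants `c₁, c₂`:
`|V u| ≃ (⨍_Q |W^{-1/p}(y) u|^{p'} dy)^{1/p'}` for all `u ∈ ℂ^n`. -/
def IsReducingOp {d n : ℕ} (p c₁ c₂ : ℝ) (Wpinv : Rd d → Mat n)
    (Q : Set (Rd d)) (V : Mat n) : Prop :=
  V.IsHermitian ∧ V.PosDef ∧
  ∀ u : EuclideanSpace ℂ (Fin n),
    c₁ * (⨍ y in Q, ‖mvec (Wpinv y) u‖ ^ (p / (p - 1))) ^ ((p - 1) / p) ≤ ‖mvec V u‖ ∧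
    ‖mvec V u‖ ≤ c₂ * (⨍ y in Q, ‖mvec (Wpinv y) u‖ ^ (p / (p - 1))) ^ ((p - 1) / p)

/-- The Christ–Goldberg maximal operator `M_{W,p}` (valued in `ℝ≥0∞`). -/
def MCG {d n : ℕ} (Wp Wpinv : Rd d → Mat n) (f : Rd d → EuclideanSpace ℂ (Fin n))
    (x : Rd d) : ℝ≥0∞ :=
  ⨆ (Q : Set (Rd d)) (_ : IsCube Q) (_ : x ∈ Q),
    ENNReal.ofReal (⨍ y in Q, ‖mvec (Wp x) (mvec (Wpinv y) (f y))‖)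

/-! ### Dyadic subdivision of cubes -/

/-- The half-open cube with lower-left corner `a` and sidelength `l`. -/
def cube {d : ℕ} (a : Rd d) (l : ℝ) : Set (Rd d) :=
  Set.univ.pi fun i => Set.Ico (a i) (a i + l)

/-- Lower-left corner of the child of `cube a l` indexed by `e`. -/
def childCorner {d : ℕ} (a : Rd d) (l : ℝ) (e : Fin d → Bool) : Rd d :=
  fun i => if e i then a i + l / 2 else a i

lemma measurableSet_cube {d : ℕ} (a : Rd d) (l : ℝ) : MeasurableSet (cube a l) :=
  MeasurableSet.univ_pi fun _ => measurableSet_Ico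

lemma volume_cube {d : ℕ} (a : Rd d) (l : ℝ) : volume (cube a l) = ENNReal.ofReal l ^ d := by
  simp [cube, Real.volume_pi_Ico]

lemma volume_cube_ne_zero {d : ℕ} (a : Rd d) {l : ℝ} (hl : 0 < l) : volume (cube a l) ≠ 0 := by
  rw [volume_cube]; simp [hl]

lemma volume_cube_ne_top {d : ℕ} (a : Rd d) (l : ℝ) : volume (cube a l) ≠ ∞ := by
  rw [volume_cube]; simp

lemma volume_real_cube_pos {d : ℕ} (a : Rd d) {l : ℝ} (hl : 0 < l) :
    0 < volume.real (cube a l) :=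
  ENNReal.toReal_pos (volume_cube_ne_zero a hl) (volume_cube_ne_top a l)

lemma volume_cube_half {d : ℕ} (a b : Rd d) (l : ℝ) :
    volume (cube a l) = 2 ^ d * volume (cube b (l / 2)) := by
  rw [volume_cube, volume_cube, ← mul_pow]
  congr 1
  rw [show (2 : ℝ≥0∞) = ENNReal.ofReal 2 by simp, ← ENNReal.ofReal_mul (by norm_num)]
  congr 1; ring

lemma iUnion_child {d : ℕ} (a : Rd d) {l : ℝ} (hl : 0 < l) :
    cube a l = ⋃ e : Fin d → Bool, cube (childCorner a l e) (l / 2) := by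
  ext x
  simp only [cube, childCorner, Set.mem_pi, Set.mem_univ, true_implies, Set.mem_Ico, Set.mem_iUnion]
  constructor
  · intro h
    refine ⟨fun i => decide (a i + l / 2 ≤ x i), fun i => ?_⟩
    have := h i
    by_cases h' : a i + l / 2 ≤ x i
    · rw [if_pos (by simpa using h')]; constructor <;> linarith
    · rw [if_neg (by simpa using h')]; constructor <;> linarith
  · rintro ⟨e, he⟩ i
    have := he i
    split_ifs at this <;> constructor <;> linarith

lemma child_subset {d : ℕ} (a : Rd d) {l : ℝ} (hl : 0 < l) (e : Fin d → Bool) :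
    cube (childCorner a l e) (l / 2) ⊆ cube a l := by
  rw [iUnion_child a hl]; exact Set.subset_iUnion (fun e => cube (childCorner a l e) (l / 2)) e

lemma child_disjoint {d : ℕ} (a : Rd d) (l : ℝ) :
    Pairwise (Function.onFun Disjoint fun e : Fin d → Bool =>
      cube (childCorner a l e) (l / 2)) := by
  intro e e' hne
  obtain ⟨i, hi⟩ := Function.ne_iff.mp hne
  refine Set.disjoint_left.mpr fun x hx hx' => ?_
  have h1 := hx i (Set.mem_univ i)
  have h2 := hx' i (Set.mem_univ i)
  simp only [childCorner, Set.mem_Ico] at h1 h2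
  cases h : e i <;> cases h' : e' i <;> simp [h, h'] at h1 h2 hi <;> linarith

/-! ### The local Calderón–Zygmund decomposition -/

/-- Calderón–Zygmund decomposition of `cube a l` at height `t`, stopped after `N` generations.
`F` is the union of the maximal dyadic subcubes on which `ν` has density above `t`. Each stopping
cube has `ν`-mass at most that of its parent, hence at most `2 ^ d * t` times its volume, and at
least half of it lies in `S` by hypothesis. -/
lemma exists_stopping {d : ℕ} (ν : Measure (Rd d)) (S Q : Set (Rd d)) (hS : MeasurableSet S)
    (t : ℝ≥0∞)
    (H : ∀ (a : Rd d) (l : ℝ), 0 < l → cube a l ⊆ Q → t * volume (cube a l) < ν (cube a l) →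
      volume (cube a l) ≤ 2 * volume (S ∩ cube a l)) (N : ℕ) :
    ∀ (a : Rd d) (l : ℝ), 0 < l → cube a l ⊆ Q → ν (cube a l) ≤ t * volume (cube a l) →
      ∃ F : Set (Rd d), ν F ≤ 2 ^ (d + 1) * t * volume (S ∩ cube a l) ∧
        ∀ x ∈ cube a l, x ∉ F → ∃ b, x ∈ cube b (l / 2 ^ N) ∧ cube b (l / 2 ^ N) ⊆ Q ∧
          ν (cube b (l / 2 ^ N)) ≤ t * volume (cube b (l / 2 ^ N)) := by
  induction N with
  | zero =>
    intro a l hl hQ hν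
    exact ⟨∅, by simp, fun x hx _ => ⟨a, by simpa using hx, by simpa using hQ, by simpa using hν⟩⟩
  | succ N ih =>
    intro a l hl hQ hν
    have key : ∀ e : Fin d → Bool, ∃ F : Set (Rd d),
        ν F ≤ 2 ^ (d + 1) * t * volume (S ∩ cube (childCorner a l e) (l / 2)) ∧
        ∀ x ∈ cube (childCorner a l e) (l / 2), x ∉ F →
          ∃ b, x ∈ cube b (l / 2 ^ (N + 1)) ∧ cube b (l / 2 ^ (N + 1)) ⊆ Q ∧
          ν (cube b (l / 2 ^ (N + 1))) ≤ t * volume (cube b (l / 2 ^ (N + 1))) := by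
      intro e
      have hsub := (child_subset a hl e).trans hQ
      by_cases hlt : t * volume (cube (childCorner a l e) (l / 2))
          < ν (cube (childCorner a l e) (l / 2))
      · refine ⟨cube (childCorner a l e) (l / 2), ?_, fun x hx hx' => absurd hx hx'⟩
        calc ν (cube (childCorner a l e) (l / 2)) ≤ ν (cube a l) :=
              measure_mono (child_subset a hl e)
          _ ≤ t * (2 ^ d * volume (cube (childCorner a l e) (l / 2))) := by
              rw [← volume_cube_half a]; exact hν
          _ ≤ t * (2 ^ d * (2 * volume (S ∩ cube (childCorner a l e) (l / 2)))) := by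
              gcongr; exact H _ _ (by positivity) hsub hlt
          _ = _ := by ring
      · obtain ⟨F, h1, h2⟩ := ih (childCorner a l e) (l / 2) (by positivity) hsub (not_lt.mp hlt)
        refine ⟨F, h1, ?_⟩
        have : l / 2 / 2 ^ N = l / 2 ^ (N + 1) := by rw [pow_succ]; field_simp
        rwa [this] at h2
    choose F hF1 hF2 using key
    refine ⟨⋃ e, F e, ?_, ?_⟩
    · calc ν (⋃ e, F e) ≤ ∑' e, ν (F e) := measure_iUnion_le F
        _ ≤ ∑' e, 2 ^ (d + 1) * t * volume (S ∩ cube (childCorner a l e) (l / 2)) :=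
            ENNReal.tsum_le_tsum hF1
        _ = 2 ^ (d + 1) * t * volume (⋃ e, S ∩ cube (childCorner a l e) (l / 2)) := by
            rw [ENNReal.tsum_mul_left, measure_iUnion]
            · intro e e' h
              exact ((child_disjoint a l h).mono Set.inter_subset_right Set.inter_subset_right)
            · exact fun e => hS.inter (measurableSet_cube _ _)
        _ = _ := by rw [← Set.inter_iUnion, ← iUnion_child a hl]
    · intro x hx hxF
      rw [iUnion_child a hl] at hx
      obtain ⟨e, he⟩ := Set.mem_iUnion.mp hx
      exact hF2 e x he fun h => hxF (Set.mem_iUnion.mpr ⟨e, h⟩)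

lemma cube_ae_eq_closedBall {d : ℕ} (a : Rd d) {l : ℝ} (hl : 0 < l) :
    cube a l =ᵐ[volume] Metric.closedBall (fun i => a i + l / 2) (l / 2) := by
  have h : Metric.closedBall (fun i => a i + l / 2) (l / 2) = Set.Icc a (fun i => a i + l) := by
    rw [closedBall_pi _ (by positivity), ← Set.pi_univ_Icc]
    congr 1; ext i : 1
    rw [Real.closedBall_eq_Icc]; congr 1 <;> ring
  rw [h]
  exact Measure.univ_pi_Ico_ae_eq_Icc

/-- Lebesgue differentiation along cubes shrinking to a point, not necessarily centred there. -/
lemma ae_le_of_frequently_average_le {d : ℕ} (w : Rd d → ℝ) (Q : Set (Rd d))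
    (hQ : MeasurableSet Q) (hw0 : ∀ x, 0 ≤ w x)
    (hw : IntegrableOn w Q) (l t : ℝ) (hl : 0 < l) (ht : 0 ≤ t) :
    ∀ᵐ x, x ∈ Q →
      (∃ᶠ N : ℕ in Filter.atTop, ∃ b, x ∈ cube b (l / 2 ^ N) ∧ cube b (l / 2 ^ N) ⊆ Q ∧
        (volume.withDensity fun x => ENNReal.ofReal (w x)) (cube b (l / 2 ^ N))
          ≤ ENNReal.ofReal t * volume (cube b (l / 2 ^ N))) → w x ≤ t := by
  have hf : Integrable (Q.indicator w) := (integrable_indicator_iff hQ).mpr hw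
  filter_upwards [IsUnifLocDoublingMeasure.ae_tendsto_average (volume : Measure (Rd d))
    hf.locallyIntegrable 1] with x hx hxQ hfr
  obtain ⟨φ, hφ, hφ'⟩ := Filter.extraction_of_frequently_atTop hfr
  choose b hb1 hb2 hb3 using hφ'
  have hpos : ∀ j, 0 < l / 2 ^ (φ j) := fun j => by positivity
  have hlim : Filter.Tendsto (fun j => l / 2 ^ (φ j) / 2) Filter.atTop (nhdsWithin 0 (Set.Ioi 0)) := by
    refine tendsto_nhdsWithin_iff.mpr ⟨?_, Filter.Eventually.of_forall fun j => ?_⟩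
    · have h1 : Filter.Tendsto (fun k : ℕ => l / 2 * (1 / 2 : ℝ) ^ k) Filter.atTop (nhds (l / 2 * 0)) :=
        (_root_.tendsto_pow_atTop_nhds_zero_of_lt_one (by norm_num) (by norm_num)).const_mul _
      rw [mul_zero] at h1
      refine (h1.comp hφ.tendsto_atTop).congr fun j => ?_
      simp only [Function.comp, one_div, inv_pow]; field_simp
    · have := hpos j; simp only [Set.mem_Ioi]; positivity
  have hmem : ∀ᶠ j in Filter.atTop, x ∈ Metric.closedBall (fun i => b j i + l / 2 ^ (φ j) / 2)
      (1 * (l / 2 ^ (φ j) / 2)) := by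
    refine Filter.Eventually.of_forall fun j => ?_
    rw [one_mul, closedBall_pi _ (by have := hpos j; positivity)]
    intro i _
    have := hb1 j i (Set.mem_univ i)
    simp only [Set.mem_Ico, Real.closedBall_eq_Icc] at this ⊢
    constructor <;> linarith
  have hT := hx _ _ hlim hmem
  rw [Set.indicator_of_mem hxQ] at hT
  refine le_of_tendsto' hT fun j => ?_
  rw [setAverage_congr (cube_ae_eq_closedBall (b j) (hpos j)).symm, setAverage_eq, smul_eq_mul,
    inv_mul_le_iff₀ (volume_real_cube_pos _ (hpos j)),
    setIntegral_congr_fun (measurableSet_cube _ _)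
      (fun y hy => Set.indicator_of_mem (hb2 j hy) w)]
  have h3 := hb3 j
  rw [withDensity_apply _ (measurableSet_cube _ _),
    ← ofReal_integral_eq_lintegral_ofReal (hw.mono_set (hb2 j))
      (Filter.Eventually.of_forall hw0)] at h3
  rw [← ENNReal.ofReal_toReal (volume_cube_ne_top (b j) (l / 2 ^ φ j)),
    ← ENNReal.ofReal_mul ht] at h3
  rw [mul_comm]
  exact (ENNReal.ofReal_le_ofReal_iff (by positivity)).mp h3

/-- The level-set estimate behind the reverse Hölder inequality: letting the number of generations
in `exists_stopping` tend to infinity, Lebesgue differentiation shows that almost every point with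
`w > t` eventually lies in the stopping cubes. In the application `S` is the superlevel set
`{w > β * t}` at the lower height `β * t`. -/
lemma mass_superlevel_le {d : ℕ} (w : Rd d → ℝ) (hw0 : ∀ x, 0 ≤ w x)
    (a : Rd d) (l : ℝ) (hl : 0 < l) (hw : IntegrableOn w (cube a l)) (t : ℝ) (ht : 0 ≤ t)
    (S : Set (Rd d)) (hS : MeasurableSet S)
    (H : ∀ (b : Rd d) (r : ℝ), 0 < r → cube b r ⊆ cube a l →
      ENNReal.ofReal t * volume (cube b r)
        < (volume.withDensity fun x => ENNReal.ofReal (w x)) (cube b r) →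
      volume (cube b r) ≤ 2 * volume (S ∩ cube b r))
    (hav : (volume.withDensity fun x => ENNReal.ofReal (w x)) (cube a l)
      ≤ ENNReal.ofReal t * volume (cube a l)) :
    (volume.withDensity fun x => ENNReal.ofReal (w x)) ({x | t < w x} ∩ cube a l)
      ≤ 2 ^ (d + 1) * ENNReal.ofReal t * volume (S ∩ cube a l) := by
  set ν : Measure (Rd d) := volume.withDensity fun x => ENNReal.ofReal (w x) with hν
  have h := fun N => exists_stopping ν S (cube a l) hS (ENNReal.ofReal t) H N a l hl subset_rfl hav
  choose F hF1 hF2 using h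
  have hac : ν ≪ volume := withDensity_absolutelyContinuous _ _
  have hle : ({x | t < w x} ∩ cube a l : Set (Rd d)) ≤ᵐ[ν] ⋃ n, ⋂ m ≥ n, F m := by
    filter_upwards [hac.ae_le (ae_le_of_frequently_average_le w (cube a l)
      (measurableSet_cube a l) hw0 hw l t hl ht)] with x hx hxm
    by_contra hcon
    refine absurd (hx hxm.2 ?_) (not_le.mpr hxm.1)
    refine Filter.frequently_atTop.mpr fun n => ?_
    have : ¬ x ∈ ⋂ m ≥ n, F m := fun h => hcon (Set.mem_iUnion.mpr ⟨n, h⟩)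
    simp only [Set.mem_iInter, not_forall] at this
    obtain ⟨m, hm, hxF⟩ := this
    exact ⟨m, hm, hF2 m x hxm.2 hxF⟩
  calc ν ({x | t < w x} ∩ cube a l) ≤ ν (⋃ n, ⋂ m ≥ n, F m) := measure_mono_ae hle
    _ = ⨆ n, ν (⋂ m ≥ n, F m) := by
        apply Monotone.measure_iUnion
        intro n n' hnn x hx
        simp only [Set.mem_iInter] at hx ⊢
        exact fun m hm => hx m (le_trans hnn hm)
    _ ≤ _ := iSup_le fun n =>
        (measure_mono (Set.iInter₂_subset n le_rfl)).trans (hF1 n)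

/-! ### The scalar reverse Hölder inequality -/

lemma lintegral_rpow_Ioc (T δ : ℝ) (hT : 0 ≤ T) (hδ : 0 < δ) :
    ∫⁻ t in Set.Ioc 0 T, ENNReal.ofReal (t ^ (δ - 1)) = ENNReal.ofReal (T ^ δ / δ) := by
  have hint : IntervalIntegrable (fun t : ℝ => t ^ (δ - 1)) volume 0 T :=
    intervalIntegral.intervalIntegrable_rpow' (by linarith)
  rw [← ofReal_integral_eq_lintegral_ofReal
    ((intervalIntegrable_iff_integrableOn_Ioc_of_le hT).mp hint),
    ← intervalIntegral.integral_of_le hT, integral_rpow (Or.inl (by linarith))]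
  · rw [sub_add_cancel, Real.zero_rpow hδ.ne', sub_zero]
  · filter_upwards [ae_restrict_mem measurableSet_Ioc] with t ht
    exact Real.rpow_nonneg ht.1.le _

/-- Reverse Hölder inequality for a weight `w` each of whose averages is, up to the factor `β`,
a lower bound for `w` on half of the cube. Finiteness of `∫ w ^ (1 + δ)` is assumed, so the
self-improving term can be absorbed. -/
lemma reverse_holder {d : ℕ} (w : Rd d → ℝ) (hwm : Measurable w) (hw0 : ∀ x, 0 ≤ w x)
    (a : Rd d) (l : ℝ) (hl : 0 < l) (β δ : ℝ) (hβ : 0 < β) (hδ : 0 < δ)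
    (hsmall : δ * 2 ^ (d + 1) * (1 / β) ^ (1 + δ) ≤ 1 / 2)
    (hw : IntegrableOn w (cube a l)) (hw' : IntegrableOn (fun x => w x ^ (1 + δ)) (cube a l))
    (H : ∀ (b : Rd d) (r t : ℝ), 0 < r → 0 < t → cube b r ⊆ cube a l →
      ENNReal.ofReal t * volume (cube b r)
        < (volume.withDensity fun x => ENNReal.ofReal (w x)) (cube b r) →
      volume (cube b r) ≤ 2 * volume ({x | β * t < w x} ∩ cube b r)) :
    ⨍ x in cube a l, w x ^ (1 + δ) ≤ 2 * (⨍ x in cube a l, w x) ^ (1 + δ) := by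
  set Q := cube a l with hQ
  have hQm : MeasurableSet Q := measurableSet_cube a l
  have hvpos : 0 < volume.real Q := volume_real_cube_pos a hl
  set ν : Measure (Rd d) := volume.withDensity fun x => ENNReal.ofReal (w x) with hν
  set T : ℝ := ⨍ x in Q, w x with hT
  have hTv : T * volume.real Q = ∫ x in Q, w x := by
    rw [hT, setAverage_eq, smul_eq_mul]; field_simp
  have hνQ : ν Q = ENNReal.ofReal (T * volume.real Q) := by
    rw [hν, withDensity_apply _ hQm, hTv, ofReal_integral_eq_lintegral_ofReal hw
      (Filter.Eventually.of_forall hw0)]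
  have hT0 : 0 ≤ T := by
    have : 0 ≤ T * volume.real Q := by rw [hTv]; exact integral_nonneg hw0
    exact nonneg_of_mul_nonneg_left this hvpos
  have hvol : volume Q = ENNReal.ofReal (volume.real Q) :=
    (ENNReal.ofReal_toReal (volume_cube_ne_top a l)).symm
  set I : ℝ := ∫ x in Q, w x ^ (1 + δ) with hI
  have hI0 : 0 ≤ I := integral_nonneg fun x => Real.rpow_nonneg (hw0 x) _
  have hwβ : ∀ x, 0 ≤ w x * (1 / β) := fun x => mul_nonneg (hw0 x) (by positivity)
  have hlev : ∀ t : ℝ, {x | t < w x * (1 / β)} = {x | β * t < w x} := fun t => by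
    ext x; simp only [Set.mem_ofPred_eq, mul_one_div, lt_div_iff₀ hβ, mul_comm]
  -- Layer cake formula for `w ^ δ` against the measure `w dx`.
  have e1 : ENNReal.ofReal I = ENNReal.ofReal δ * ∫⁻ t in Set.Ioi (0 : ℝ),
      ν ({x | t < w x} ∩ Q) * ENNReal.ofReal (t ^ (δ - 1)) := by
    have h := lintegral_rpow_eq_lintegral_meas_lt_mul (ν.restrict Q) (f := w)
      (Filter.Eventually.of_forall hw0) hwm.aemeasurable hδ
    have h2 : ENNReal.ofReal I = ∫⁻ x, ENNReal.ofReal (w x ^ δ) ∂(ν.restrict Q) := by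
      rw [hI, ofReal_integral_eq_lintegral_ofReal hw'
        (Filter.Eventually.of_forall fun x => Real.rpow_nonneg (hw0 x) _), hν,
        restrict_withDensity hQm, lintegral_withDensity_eq_lintegral_mul _ (by fun_prop)
        (by fun_prop)]
      refine lintegral_congr fun x => ?_
      rw [Pi.mul_apply, ← ENNReal.ofReal_mul (hw0 x),
        Real.rpow_add_of_nonneg (hw0 x) (by norm_num) hδ.le, Real.rpow_one]
    rw [h2, h]
    congr 1
    refine lintegral_congr fun t => ?_
    rw [Measure.restrict_apply (measurableSet_lt measurable_const hwm)]
  -- Layer cake formula for `(w / β) ^ (1 + δ)` against Lebesgue measure.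
  have e2 : ENNReal.ofReal ((1 / β) ^ (1 + δ) * I) = ENNReal.ofReal (1 + δ) *
      ∫⁻ t in Set.Ioi (0 : ℝ), volume ({x | β * t < w x} ∩ Q) * ENNReal.ofReal (t ^ δ) := by
    have h := lintegral_rpow_eq_lintegral_meas_lt_mul (volume.restrict Q)
      (f := fun x => w x * (1 / β))
      (Filter.Eventually.of_forall hwβ) (by fun_prop) (p := 1 + δ) (by linarith)
    have h2 : ENNReal.ofReal ((1 / β) ^ (1 + δ) * I)
        = ∫⁻ x in Q, ENNReal.ofReal ((w x * (1 / β)) ^ (1 + δ)) := by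
      have : ∀ x, (w x * (1 / β)) ^ (1 + δ) = (1 / β) ^ (1 + δ) * w x ^ (1 + δ) := fun x => by
        rw [Real.mul_rpow (hw0 x) (by positivity), mul_comm]
      simp only [this]
      rw [hI, ← integral_const_mul, ofReal_integral_eq_lintegral_ofReal (hw'.const_mul _)]
      exact Filter.Eventually.of_forall fun x =>
        mul_nonneg (by positivity) (Real.rpow_nonneg (hw0 x) _)
    rw [h2, h]
    congr 1
    refine lintegral_congr fun t => ?_
    rw [hlev, Measure.restrict_apply (measurableSet_lt measurable_const hwm),
      add_sub_cancel_left]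
  have e3 : ∫⁻ t in Set.Ioi (0 : ℝ), ν ({x | t < w x} ∩ Q) * ENNReal.ofReal (t ^ (δ - 1))
      ≤ ν Q * ENNReal.ofReal (T ^ δ / δ) + 2 ^ (d + 1) * ∫⁻ t in Set.Ioi (0 : ℝ),
        volume ({x | β * t < w x} ∩ Q) * ENNReal.ofReal (t ^ δ) := by
    rw [← Set.Ioc_union_Ioi_eq_Ioi hT0, ← lintegral_rpow_Ioc T δ hT0 hδ]
    refine (lintegral_union_le _ _ _).trans (add_le_add ?_ ?_)
    · rw [← lintegral_const_mul _ (by fun_prop)]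
      gcongr
      exact Set.inter_subset_right
    · rw [← lintegral_const_mul' _ _ (by finiteness)]
      refine (setLIntegral_mono' measurableSet_Ioi fun t ht => ?_).trans
        (lintegral_mono_set (Set.subset_union_right))
      have htp : 0 < t := hT0.trans_lt ht
      have h := mass_superlevel_le w hw0 a l hl hw t htp.le {x | β * t < w x}
        (measurableSet_lt measurable_const hwm) (fun b r hr hb hlt => H b r t hr htp hb hlt)
        (by
          rw [← hν, ← hQ, hνQ, hvol, ← ENNReal.ofReal_mul htp.le]
          exact ENNReal.ofReal_le_ofReal (mul_le_mul_of_nonneg_right (le_of_lt ht) hvpos.le))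
      calc ν ({x | t < w x} ∩ Q) * ENNReal.ofReal (t ^ (δ - 1))
          ≤ (2 ^ (d + 1) * ENNReal.ofReal t * volume ({x | β * t < w x} ∩ Q))
            * ENNReal.ofReal (t ^ (δ - 1)) := by gcongr
        _ = 2 ^ (d + 1) * (volume ({x | β * t < w x} ∩ Q) *
            (ENNReal.ofReal t * ENNReal.ofReal (t ^ (δ - 1)))) := by ring
        _ = _ := by
            rw [← ENNReal.ofReal_mul htp.le, ← Real.rpow_one_add' htp.le (by linarith),
              add_sub_cancel]
  set J := ∫⁻ t in Set.Ioi (0 : ℝ), volume ({x | β * t < w x} ∩ Q) * ENNReal.ofReal (t ^ δ)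
    with hJ
  have e4 : ENNReal.ofReal I
      ≤ ENNReal.ofReal (T ^ δ * (T * volume.real Q) + I / 2) := by
    have hJle : J ≤ ENNReal.ofReal ((1 / β) ^ (1 + δ) * I) := by
      rw [e2]
      refine le_mul_of_one_le_left zero_le ?_
      rw [← ENNReal.ofReal_one]
      exact ENNReal.ofReal_le_ofReal (by linarith)
    have h2 : (2 : ℝ≥0∞) ^ (d + 1) = ENNReal.ofReal (2 ^ (d + 1)) := by
      rw [ENNReal.ofReal_pow (by norm_num)]; simp
    have hTδ : 0 ≤ T ^ δ := Real.rpow_nonneg hT0 _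
    calc ENNReal.ofReal I
        ≤ ENNReal.ofReal δ * (ν Q * ENNReal.ofReal (T ^ δ / δ) + 2 ^ (d + 1) *
            ENNReal.ofReal ((1 / β) ^ (1 + δ) * I)) := by
          rw [e1]; gcongr; exact e3.trans (by gcongr)
      _ = ENNReal.ofReal (δ * (T * volume.real Q * (T ^ δ / δ)
            + 2 ^ (d + 1) * ((1 / β) ^ (1 + δ) * I))) := by
          rw [hνQ, h2, ← ENNReal.ofReal_mul (by positivity), ← ENNReal.ofReal_mul (by positivity),
            ← ENNReal.ofReal_add (by positivity) (by positivity), ← ENNReal.ofReal_mul hδ.le]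
      _ ≤ _ := by
          apply ENNReal.ofReal_le_ofReal
          have h5 := mul_le_mul_of_nonneg_right hsmall hI0
          have h6 : δ * (T * volume.real Q * (T ^ δ / δ)) = T ^ δ * (T * volume.real Q) := by
            field_simp
          nlinarith
  have hTδ : 0 ≤ T ^ δ := Real.rpow_nonneg hT0 _
  rw [ENNReal.ofReal_le_ofReal_iff (by positivity)] at e4
  rw [setAverage_eq, smul_eq_mul, inv_mul_le_iff₀ hvpos, Real.rpow_add_of_nonneg hT0 (by norm_num)
    hδ.le, Real.rpow_one]
  change I ≤ _
  linarith

/-- Chebyshev's inequality for the dual weight: an `A_p` bound on one cube forces the weight to be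
at least `β` times its average on half of the cube, with `β = 1 / (2 ^ (p - 1) * A)`. -/
lemma half_measure_of_Ap {d : ℕ} (p : ℝ) (hp : 1 < p) (w : Rd d → ℝ) (hwm : Measurable w)
    (hw0 : ∀ x, 0 < w x) (b : Rd d) (r : ℝ) (hr : 0 < r) (A : ℝ) (hA : 1 ≤ A)
    (hw : IntegrableOn w (cube b r))
    (hσ : IntegrableOn (fun x => w x ^ (-(1 / (p - 1)))) (cube b r))
    (hAp : (⨍ x in cube b r, w x) * (⨍ x in cube b r, w x ^ (-(1 / (p - 1)))) ^ (p - 1) ≤ A)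
    (t : ℝ) (ht : 0 < t)
    (hlt : ENNReal.ofReal t * volume (cube b r)
        < (volume.withDensity fun x => ENNReal.ofReal (w x)) (cube b r)) :
    volume (cube b r) ≤ 2 * volume ({x | 1 / (2 ^ (p - 1) * A) * t < w x} ∩ cube b r) := by
  set R := cube b r with hR
  have hRm : MeasurableSet R := measurableSet_cube b r
  have hvpos : 0 < volume.real R := volume_real_cube_pos b hr
  have hp1 : 0 < p - 1 := by linarith
  have hA0 : 0 < A := by linarith
  set β := 1 / (2 ^ (p - 1) * A) with hβ
  have hβ0 : 0 < β := by positivity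
  have hvol : volume R = ENNReal.ofReal (volume.real R) :=
    (ENNReal.ofReal_toReal (volume_cube_ne_top b r)).symm
  have htw : t < ⨍ x in R, w x := by
    rw [withDensity_apply _ hRm, ← ofReal_integral_eq_lintegral_ofReal hw
      (Filter.Eventually.of_forall fun x => (hw0 x).le), hvol, ← ENNReal.ofReal_mul ht.le,
      ENNReal.ofReal_lt_ofReal_iff_of_nonneg (by positivity)] at hlt
    rw [setAverage_eq, smul_eq_mul, lt_inv_mul_iff₀ hvpos, mul_comm]
    exact hlt
  set m := ⨍ x in R, w x ^ (-(1 / (p - 1))) with hm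
  have hmv : m * volume.real R = ∫ x in R, w x ^ (-(1 / (p - 1))) := by
    rw [hm, setAverage_eq, smul_eq_mul]; field_simp
  have hm0 : 0 ≤ m := by
    have : 0 ≤ m * volume.real R := by
      rw [hmv]; exact integral_nonneg fun x => Real.rpow_nonneg (hw0 x).le _
    exact nonneg_of_mul_nonneg_left this hvpos
  have hmA : t * m ^ (p - 1) ≤ A :=
    (mul_le_mul_of_nonneg_right htw.le (Real.rpow_nonneg hm0 _)).trans hAp
  set ε := (β * t) ^ (-(1 / (p - 1))) with hε
  have hε0 : 0 < ε := by positivity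
  have hεp : ε ^ (p - 1) = (β * t)⁻¹ := by
    rw [hε, ← Real.rpow_mul (by positivity), neg_mul, one_div_mul_cancel hp1.ne', Real.rpow_neg_one]
  have hcheb := mul_meas_ge_le_integral_of_nonneg (μ := volume.restrict R)
    (Filter.Eventually.of_forall fun x => Real.rpow_nonneg (hw0 x).le (-(1 / (p - 1)))) hσ ε
  rw [← hmv] at hcheb
  have h2m : 2 * m ≤ ε := by
    refine (Real.rpow_le_rpow_iff (by positivity) hε0.le hp1).mp ?_
    have : (β * t)⁻¹ = 2 ^ (p - 1) * (A / t) := by rw [hβ]; field_simp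
    rw [Real.mul_rpow (by norm_num) hm0, hεp, this]
    gcongr
    rw [le_div_iff₀ ht, mul_comm]
    exact hmA
  set E := {x | ε ≤ w x ^ (-(1 / (p - 1)))} with hE
  have hEeq : {x | β * t < w x}ᶜ ⊆ E := by
    intro x hx
    simp only [Set.mem_compl_iff, Set.mem_ofPred_eq, not_lt] at hx
    exact Real.rpow_le_rpow_of_nonpos (hw0 x) hx (by simp; linarith)
  have hEm : MeasurableSet E := measurableSet_le measurable_const (by fun_prop)
  have hEle : volume.real (E ∩ R) ≤ volume.real R / 2 := by
    rw [measureReal_restrict_apply hEm] at hcheb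
    have h1 : 2 * m * volume.real (E ∩ R) ≤ ε * volume.real (E ∩ R) := by gcongr
    rcases hm0.eq_or_lt with h0 | h0
    · rw [← h0, zero_mul] at hcheb
      have : volume.real (E ∩ R) ≤ 0 := by
        by_contra hcon
        have := mul_pos hε0 (not_le.mp hcon)
        linarith
      linarith
    · have : m * (2 * volume.real (E ∩ R)) ≤ m * volume.real R := by linarith
      have := le_of_mul_le_mul_left this h0
      linarith
  have hsplit : volume.real R ≤ volume.real (E ∩ R) + volume.real ({x | β * t < w x} ∩ R) := by
    refine (measureReal_mono ?_ ?_).trans (measureReal_union_le _ _)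
    · intro x hx
      by_cases h : β * t < w x
      · exact Or.inr ⟨h, hx⟩
      · exact Or.inl ⟨hEeq h, hx⟩
    · exact ne_top_of_le_ne_top (volume_cube_ne_top b r)
        (measure_mono (Set.union_subset Set.inter_subset_right Set.inter_subset_right))
  have hfin : volume ({x | β * t < w x} ∩ R) = ENNReal.ofReal (volume.real ({x | β * t < w x} ∩ R)) :=
    (ENNReal.ofReal_toReal (ne_top_of_le_ne_top (volume_cube_ne_top b r)
      (measure_mono Set.inter_subset_right))).symm
  rw [hfin, hvol, show (2 : ℝ≥0∞) = ENNReal.ofReal 2 by simp, ← ENNReal.ofReal_mul (by norm_num)]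
  exact ENNReal.ofReal_le_ofReal (by linarith)

/-- Choice of the reverse Hölder exponent: with `δ = 1 / (c * A)` and `c` large in terms of `d` and
`p` only, the self-improving coefficient is at most `1 / 2`, because `A ^ (1 / A)` is bounded. -/
lemma coefficient_small (d : ℕ) (p : ℝ) (hp : 1 < p) (A : ℝ) (hA : 1 ≤ A) :
    1 / (3 * 2 ^ (d + 2) * 4 ^ (p - 1) * A) * 2 ^ (d + 1) *
      (1 / (1 / (2 ^ (p - 1) * A))) ^ (1 + 1 / (3 * 2 ^ (d + 2) * 4 ^ (p - 1) * A)) ≤ 1 / 2 := by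
  have hA0 : 0 < A := by linarith
  have h4 : (4 : ℝ) ^ (p - 1) = 2 ^ (p - 1) * 2 ^ (p - 1) := by
    rw [← Real.mul_rpow (by norm_num) (by norm_num)]; norm_num
  set B : ℝ := 2 ^ (p - 1) with hB
  have hB1 : 1 ≤ B := Real.one_le_rpow (by norm_num) (by linarith)
  have hD : (1 : ℝ) ≤ 2 ^ (d + 2) := one_le_pow₀ (by norm_num)
  set c : ℝ := 3 * 2 ^ (d + 2) * 4 ^ (p - 1) with hc
  have hc1 : 1 ≤ c := by
    rw [hc, h4]; nlinarith [mul_le_mul hD (mul_le_mul hB1 hB1 zero_le_one (by linarith)) (by norm_num) (by positivity)]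
  have hcA : 1 ≤ c * A := by nlinarith
  set δ := 1 / (c * A) with hδ
  have hδ0 : 0 < δ := by positivity
  have hδ1 : δ ≤ 1 := by rw [hδ, div_le_one (by positivity)]; exact hcA
  have hBδ : B ^ δ ≤ B := by
    conv_rhs => rw [← Real.rpow_one B]
    exact Real.rpow_le_rpow_of_exponent_le hB1 hδ1
  have hAδ : A ^ δ ≤ 3 := by
    calc A ^ δ ≤ A ^ (1 / A) := by
          apply Real.rpow_le_rpow_of_exponent_le hA
          rw [hδ]; apply one_div_le_one_div_of_le hA0; nlinarith
      _ ≤ (Real.exp A) ^ (1 / A) := by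
          apply Real.rpow_le_rpow hA0.le _ (by positivity)
          linarith [Real.add_one_le_exp A]
      _ = Real.exp 1 := by rw [← Real.exp_mul]; congr 1; field_simp
      _ ≤ 3 := by linarith [Real.exp_one_lt_d9]
  rw [one_div_one_div, Real.rpow_add (by positivity), Real.rpow_one,
    Real.mul_rpow (by positivity) hA0.le]
  calc δ * 2 ^ (d + 1) * (B * A * (B ^ δ * A ^ δ)) ≤ δ * 2 ^ (d + 1) * (B * A * (B * 3)) := by
        gcongr
    _ = 1 / 2 := by
        rw [hδ, hc, h4]; field_simp; ring

/-! ### Operator norms and measurability of matrix-valued functions -/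

lemma matOpNorm_nonneg {n : ℕ} (M : Mat n) : 0 ≤ matOpNorm M := norm_nonneg _

lemma matOpNorm_mul_le {n : ℕ} (M N : Mat n) : matOpNorm (M * N) ≤ matOpNorm M * matOpNorm N := by
  unfold matOpNorm; rw [map_mul]; exact norm_mul_le _ _

lemma matOpNorm_conjTranspose {n : ℕ} (M : Mat n) : matOpNorm M.conjTranspose = matOpNorm M := by
  unfold matOpNorm
  rw [← Matrix.star_eq_conjTranspose, map_star, ContinuousLinearMap.star_eq_adjoint,
    LinearIsometryEquiv.norm_map]

/-- For Hermitian matrices, `‖M N‖ = ‖N M‖`. -/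
lemma matOpNorm_mul_comm {n : ℕ} {M N : Mat n} (hM : M.IsHermitian) (hN : N.IsHermitian) :
    matOpNorm (M * N) = matOpNorm (N * M) := by
  rw [← matOpNorm_conjTranspose, Matrix.conjTranspose_mul, hM.eq, hN.eq]

lemma mvec_eq {n : ℕ} (M : Mat n) (v : EuclideanSpace ℂ (Fin n)) :
    mvec M v = Matrix.toEuclideanCLM (𝕜 := ℂ) M v := rfl

lemma mvec_mul {n : ℕ} (M N : Mat n) (v : EuclideanSpace ℂ (Fin n)) :
    mvec (M * N) v = mvec M (mvec N v) := by
  simp only [mvec_eq, map_mul]; rfl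

lemma mvec_one {n : ℕ} (v : EuclideanSpace ℂ (Fin n)) : mvec 1 v = v := by
  simp only [mvec_eq, map_one]; rfl

lemma norm_mvec_le {n : ℕ} (M : Mat n) (v : EuclideanSpace ℂ (Fin n)) :
    ‖mvec M v‖ ≤ matOpNorm M * ‖v‖ := by
  rw [mvec_eq]; exact ContinuousLinearMap.le_opNorm (Matrix.toEuclideanCLM (𝕜 := ℂ) M) v

/-- The standard basis vector `e_i` of `ℂ^n`. -/
def stdVec {n : ℕ} (i : Fin n) : EuclideanSpace ℂ (Fin n) := EuclideanSpace.single i 1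

lemma norm_stdVec {n : ℕ} (i : Fin n) : ‖stdVec i‖ = 1 := by simp [stdVec]

lemma matOpNorm_le_sum {n : ℕ} (M : Mat n) : matOpNorm M ≤ ∑ i, ‖mvec M (stdVec i)‖ := by
  refine ContinuousLinearMap.opNorm_le_bound _ (Finset.sum_nonneg fun i _ => norm_nonneg _)
    fun v => ?_
  have hv : v = ∑ i, v i • stdVec i := by
    ext j; simp [stdVec, Finset.sum_apply, Pi.single_apply]
  conv_lhs => rw [hv]
  rw [map_sum, Finset.sum_mul]
  refine norm_sum_le_of_le _ fun i _ => ?_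
  rw [map_smul, norm_smul, mul_comm]
  exact mul_le_mul_of_nonneg_left (PiLp.norm_apply_le v i) (norm_nonneg _)

lemma matOpNorm_rpow_le {n : ℕ} (M : Mat n) (q : ℝ) (hq : 1 ≤ q) :
    matOpNorm M ^ q ≤ (n : ℝ) ^ (q - 1) * ∑ i, ‖mvec M (stdVec i)‖ ^ q := by
  have h := Real.rpow_sum_le_const_mul_sum_rpow Finset.univ
    (fun i => ‖mvec M (stdVec i)‖) hq
  simp only [abs_norm, Finset.card_univ, Fintype.card_fin] at h
  exact (Real.rpow_le_rpow (matOpNorm_nonneg M) (matOpNorm_le_sum M) (by linarith)).trans h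

lemma measurable_mvec {n : ℕ} {X : Type*} [MeasurableSpace X] (F : X → Mat n)
    (hF : ∀ i j, Measurable fun x => F x i j) (v : EuclideanSpace ℂ (Fin n)) :
    Measurable fun x => ‖mvec (F x) v‖ := by
  have : ∀ x, ‖mvec (F x) v‖ = √(∑ i, ‖∑ j, F x i j * v j‖ ^ 2) := fun x => by
    rw [EuclideanSpace.norm_eq]; rfl
  simp only [this]
  fun_prop

lemma measurable_matOpNorm {n : ℕ} {X : Type*} [MeasurableSpace X] (F : X → Mat n)
    (hF : ∀ i j, Measurable fun x => F x i j) : Measurable fun x => matOpNorm (F x) := by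
  let L : (Fin n → Fin n → ℂ) →ₗ[ℂ] (EuclideanSpace ℂ (Fin n) →L[ℂ] EuclideanSpace ℂ (Fin n)) :=
    (Matrix.toEuclideanCLM (𝕜 := ℂ) (n := Fin n)).toAlgEquiv.toLinearMap ∘ₗ
      (Matrix.ofLinearEquiv ℂ).toLinearMap
  have hL : Continuous fun f => ‖L f‖ := (L.continuous_of_finiteDimensional).norm
  have h2 : Measurable fun x => (fun i j => F x i j) :=
    measurable_pi_lambda _ fun i => measurable_pi_lambda _ fun j => hF i j
  exact hL.measurable.comp h2

lemma measurable_mul_entry {n : ℕ} {X : Type*} [MeasurableSpace X] (F G : X → Mat n)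
    (hF : ∀ i j, Measurable fun x => F x i j) (hG : ∀ i j, Measurable fun x => G x i j) :
    ∀ i j, Measurable fun x => (F x * G x) i j := by
  intro i j
  simp only [Matrix.mul_apply]
  fun_prop

/-! ### Consequences of the matrix `A_p` condition -/

/-- The inner average in the matrix `A_p` condition over `R`. -/
def innerAvg {d n : ℕ} (p : ℝ) (Wp Wpinv : Rd d → Mat n) (R : Set (Rd d)) (x : Rd d) : ℝ :=
  ⨍ y in R, matOpNorm (Wp x * Wpinv y) ^ (p / (p - 1))

section
variable {d n : ℕ} (p : ℝ) (hp : 1 < p) (Wp Wpinv : Rd d → Mat n)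
  (hW : IsMatrixWeightPair Wp Wpinv) (b : Rd d) (r : ℝ) (hr : 0 < r)
  (hI : IntegrableOn (fun y => matOpNorm (Wpinv y) ^ (p / (p - 1))) (cube b r))

include hp hW hI in
lemma integrableOn_inner (x : Rd d) :
    IntegrableOn (fun y => matOpNorm (Wp x * Wpinv y) ^ (p / (p - 1))) (cube b r) := by
  have hq : 0 < p / (p - 1) := div_pos (by linarith) (by linarith)
  refine Integrable.mono' (hI.const_mul (matOpNorm (Wp x) ^ (p / (p - 1)))) ?_
    (Filter.Eventually.of_forall fun y => ?_)
  · exact ((measurable_matOpNorm (fun y => Wp x * Wpinv y) (measurable_mul_entry (fun _ => Wp x)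
      Wpinv (fun _ _ => measurable_const) hW.2.2.2.2.2.2)).pow_const _).aestronglyMeasurable
  · rw [Real.norm_of_nonneg (Real.rpow_nonneg (matOpNorm_nonneg _) _),
      ← Real.mul_rpow (matOpNorm_nonneg _) (matOpNorm_nonneg _)]
    exact Real.rpow_le_rpow (matOpNorm_nonneg _) (matOpNorm_mul_le _ _) hq.le

lemma innerAvg_nonneg (R : Set (Rd d)) (x : Rd d) : 0 ≤ innerAvg p Wp Wpinv R x := by
  rw [innerAvg, setAverage_eq, smul_eq_mul]
  exact mul_nonneg (by positivity) (integral_nonneg fun y => Real.rpow_nonneg (matOpNorm_nonneg _) _)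

lemma setAverage_mono {R : Set (Rd d)} {f g : Rd d → ℝ} (hf : IntegrableOn f R)
    (hg : IntegrableOn g R) (h : ∀ x, f x ≤ g x) : ⨍ x in R, f x ≤ ⨍ x in R, g x := by
  rw [setAverage_eq, setAverage_eq, smul_eq_mul, smul_eq_mul]
  exact mul_le_mul_of_nonneg_left (integral_mono hf hg h) (by positivity)

lemma setAverage_const_mul (R : Set (Rd d)) (f : Rd d → ℝ) (k : ℝ) :
    ⨍ x in R, k * f x = k * ⨍ x in R, f x := by
  rw [setAverage_eq, setAverage_eq, smul_eq_mul, smul_eq_mul, integral_const_mul]; ring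

lemma setAverage_nonneg {R : Set (Rd d)} {f : Rd d → ℝ} (h : ∀ x, 0 ≤ f x) :
    0 ≤ ⨍ x in R, f x := by
  rw [setAverage_eq, smul_eq_mul]
  exact mul_nonneg (by positivity) (integral_nonneg h)

include hp hW hI in
/-- When both `‖W^{1/p}‖ ^ p` and `‖W^{-1/p}‖ ^ p'` are integrable, the outer integrand of the
`A_p` condition is integrable, so that condition is a genuine bound rather than a statement about
the default value of the integral. -/
lemma integrableOn_outer (hP : IntegrableOn (fun x => matOpNorm (Wp x) ^ p) (cube b r)) :
    IntegrableOn (fun x => innerAvg p Wp Wpinv (cube b r) x ^ (p - 1)) (cube b r) := by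
  have hp1 : 0 < p - 1 := by linarith
  have hq : 0 < p / (p - 1) := div_pos (by linarith) hp1
  set D := ⨍ y in cube b r, matOpNorm (Wpinv y) ^ (p / (p - 1)) with hD
  have hD0 : 0 ≤ D := setAverage_nonneg fun y => Real.rpow_nonneg (matOpNorm_nonneg _) _
  refine Integrable.mono' (hP.const_mul (D ^ (p - 1))) ?_ (Filter.Eventually.of_forall fun x => ?_)
  · have hm : Measurable (Function.uncurry fun x y : Rd d =>
        matOpNorm (Wp x * Wpinv y) ^ (p / (p - 1))) :=
      (measurable_matOpNorm (fun z : Rd d × Rd d => Wp z.1 * Wpinv z.2)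
        (measurable_mul_entry _ _ (fun i j => (hW.2.2.2.2.2.1 i j).comp measurable_fst)
          (fun i j => (hW.2.2.2.2.2.2 i j).comp measurable_snd))).pow_const _
    have h1 := (StronglyMeasurable.integral_prod_right (ν := volume.restrict (cube b r))
      hm.stronglyMeasurable).measurable
    have h2 : Measurable (innerAvg p Wp Wpinv (cube b r)) := by
      have : innerAvg p Wp Wpinv (cube b r) = fun x => (volume.real (cube b r))⁻¹ *
          ∫ y in cube b r, matOpNorm (Wp x * Wpinv y) ^ (p / (p - 1)) := by
        ext x; rw [innerAvg, setAverage_eq, smul_eq_mul]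
      rw [this]; exact h1.const_mul _
    exact (h2.pow_const _).aestronglyMeasurable
  · rw [Real.norm_of_nonneg (Real.rpow_nonneg (innerAvg_nonneg p Wp Wpinv _ x) _)]
    have h1 : innerAvg p Wp Wpinv (cube b r) x ≤ matOpNorm (Wp x) ^ (p / (p - 1)) * D := by
      rw [hD, ← setAverage_const_mul]
      refine setAverage_mono (integrableOn_inner p hp Wp Wpinv hW b r hI x) (hI.const_mul _)
        fun y => ?_
      rw [← Real.mul_rpow (matOpNorm_nonneg _) (matOpNorm_nonneg _)]
      exact Real.rpow_le_rpow (matOpNorm_nonneg _) (matOpNorm_mul_le _ _) hq.le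
    calc innerAvg p Wp Wpinv (cube b r) x ^ (p - 1)
        ≤ (matOpNorm (Wp x) ^ (p / (p - 1)) * D) ^ (p - 1) :=
          Real.rpow_le_rpow (innerAvg_nonneg p Wp Wpinv _ x) h1 hp1.le
      _ = _ := by
          rw [Real.mul_rpow (Real.rpow_nonneg (matOpNorm_nonneg _) _) hD0,
            ← Real.rpow_mul (matOpNorm_nonneg _), div_mul_cancel₀ _ hp1.ne', mul_comm]

include hW in
lemma norm_mvec_pos {u : EuclideanSpace ℂ (Fin n)} (hu : u ≠ 0) (x : Rd d) :
    0 < ‖mvec (Wp x) u‖ := by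
  rw [norm_pos_iff]
  intro h
  have h1 : Wpinv x * Wp x = 1 := mul_eq_one_comm.mp (hW.2.2.2.2.1 x)
  have : u = mvec (Wpinv x) (mvec (Wp x) u) := by rw [← mvec_mul, h1, mvec_one]
  rw [h] at this
  exact hu (this.trans (by simp [mvec_eq]))

include hp hW hI in
lemma integrableOn_dual {u : EuclideanSpace ℂ (Fin n)} (hu : u ≠ 0) :
    IntegrableOn (fun x => (‖mvec (Wp x) u‖ ^ p) ^ (-(1 / (p - 1)))) (cube b r) := by
  have hp1 : 0 < p - 1 := by linarith
  have hq : 0 < p / (p - 1) := div_pos (by linarith) hp1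
  have hu0 : 0 < ‖u‖ := norm_pos_iff.mpr hu
  refine Integrable.mono' (hI.const_mul ((‖u‖ ^ (p / (p - 1)))⁻¹)) ?_
    (Filter.Eventually.of_forall fun x => ?_)
  · exact (((measurable_mvec _ hW.2.2.2.2.2.1 u).pow_const _).pow_const _).aestronglyMeasurable
  · have hw := norm_mvec_pos Wp Wpinv hW hu x
    rw [Real.norm_of_nonneg (by positivity), ← Real.rpow_mul hw.le,
      show p * -(1 / (p - 1)) = -(p / (p - 1)) by ring, Real.rpow_neg hw.le,
      inv_mul_eq_div, le_div_iff₀ (by positivity), inv_mul_le_iff₀ (by positivity),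
      ← Real.mul_rpow hw.le (matOpNorm_nonneg _)]
    refine Real.rpow_le_rpow hu0.le ?_ hq.le
    have h1 : Wpinv x * Wp x = 1 := mul_eq_one_comm.mp (hW.2.2.2.2.1 x)
    have : u = mvec (Wpinv x) (mvec (Wp x) u) := by rw [← mvec_mul, h1, mvec_one]
    conv_lhs => rw [this]
    rw [mul_comm]
    exact norm_mvec_le _ _

include hW in
lemma integrableOn_weight (hp0 : 0 < p)
    (hP : IntegrableOn (fun x => matOpNorm (Wp x) ^ p) (cube b r))
    (u : EuclideanSpace ℂ (Fin n)) :
    IntegrableOn (fun x => ‖mvec (Wp x) u‖ ^ p) (cube b r) := by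
  refine Integrable.mono' (hP.const_mul (‖u‖ ^ p)) ?_ (Filter.Eventually.of_forall fun x => ?_)
  · exact ((measurable_mvec _ hW.2.2.2.2.2.1 u).pow_const _).aestronglyMeasurable
  · rw [Real.norm_of_nonneg (by positivity), ← Real.mul_rpow (norm_nonneg _) (matOpNorm_nonneg _),
      mul_comm]
    exact Real.rpow_le_rpow (norm_nonneg _) (norm_mvec_le _ _) hp0.le

include hp hW hI in
/-- The scalar weights `|W^{1/p} u| ^ p` inherit the `A_p` bound, since
`|W^{1/p}(x) u| ≤ ‖W^{1/p}(x) W^{-1/p}(y)‖ |W^{1/p}(y) u|`. -/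
lemma scalar_Ap (hP : IntegrableOn (fun x => matOpNorm (Wp x) ^ p) (cube b r)) (A : ℝ)
    (hA : ⨍ x in cube b r, innerAvg p Wp Wpinv (cube b r) x ^ (p - 1) ≤ A)
    {u : EuclideanSpace ℂ (Fin n)} (hu : u ≠ 0) :
    (⨍ x in cube b r, ‖mvec (Wp x) u‖ ^ p) *
      (⨍ x in cube b r, (‖mvec (Wp x) u‖ ^ p) ^ (-(1 / (p - 1)))) ^ (p - 1) ≤ A := by
  have hp1 : 0 < p - 1 := by linarith
  have hq : 0 < p / (p - 1) := div_pos (by linarith) hp1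
  set m := ⨍ x in cube b r, (‖mvec (Wp x) u‖ ^ p) ^ (-(1 / (p - 1))) with hm
  have hm0 : 0 ≤ m := setAverage_nonneg fun x => by positivity
  refine le_trans ?_ hA
  rw [mul_comm, ← setAverage_const_mul]
  refine setAverage_mono ((integrableOn_weight p Wp Wpinv hW b r (by linarith) hP u).const_mul _)
    (integrableOn_outer p hp Wp Wpinv hW b r hI hP) fun x => ?_
  have h1 : ‖mvec (Wp x) u‖ ^ (p / (p - 1)) * m ≤ innerAvg p Wp Wpinv (cube b r) x := by
    rw [hm, ← setAverage_const_mul]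
    refine setAverage_mono ((integrableOn_dual p hp Wp Wpinv hW b r hI hu).const_mul _)
      (integrableOn_inner p hp Wp Wpinv hW b r hI x) fun y => ?_
    have hw := norm_mvec_pos Wp Wpinv hW hu y
    rw [← Real.rpow_mul hw.le, show p * -(1 / (p - 1)) = -(p / (p - 1)) by ring,
      Real.rpow_neg hw.le, ← div_eq_mul_inv, div_le_iff₀ (by positivity),
      ← Real.mul_rpow (matOpNorm_nonneg _) hw.le]
    refine Real.rpow_le_rpow (norm_nonneg _) ?_ hq.le
    have h1 : Wpinv y * Wp y = 1 := mul_eq_one_comm.mp (hW.2.2.2.2.1 y)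
    have : mvec (Wp x) u = mvec (Wp x * Wpinv y) (mvec (Wp y) u) := by
      rw [← mvec_mul, mul_assoc, h1, mul_one]
    rw [this]
    exact norm_mvec_le _ _
  calc m ^ (p - 1) * ‖mvec (Wp x) u‖ ^ p
      = (‖mvec (Wp x) u‖ ^ (p / (p - 1)) * m) ^ (p - 1) := by
        rw [Real.mul_rpow (by positivity) hm0, ← Real.rpow_mul (norm_nonneg _),
          div_mul_cancel₀ _ hp1.ne', mul_comm]
    _ ≤ _ := Real.rpow_le_rpow (by positivity) h1 hp1.le

end

/-- A reducing operator can only exist when `‖W^{-1/p}‖ ^ p'` is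
integrable on the cube: otherwise some average in its definition takes the default value `0`, and
the upper bound makes `V` singular. -/
lemma integrableOn_of_reducing {d n : ℕ} (p : ℝ) (hp : 1 < p) (c₁ c₂ : ℝ) (Wp Wpinv : Rd d → Mat n)
    (hW : IsMatrixWeightPair Wp Wpinv) (Q : Set (Rd d)) (V : Mat n)
    (hV : IsReducingOp p c₁ c₂ Wpinv Q V) :
    IntegrableOn (fun y => matOpNorm (Wpinv y) ^ (p / (p - 1))) Q := by
  have hp1 : 0 < p - 1 := by linarith
  have hq1 : 1 ≤ p / (p - 1) := by rw [le_div_iff₀ hp1]; linarith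
  have hcol : ∀ u : EuclideanSpace ℂ (Fin n),
      IntegrableOn (fun y => ‖mvec (Wpinv y) u‖ ^ (p / (p - 1))) Q := by
    intro u
    by_contra hcon
    have h := (hV.2.2 u).2
    rw [setAverage_eq, integral_undef hcon, smul_zero, Real.zero_rpow (by positivity),
      mul_zero] at h
    have hVu : mvec V u = 0 := norm_le_zero_iff.mp h
    have hu : u = 0 := by
      obtain ⟨N, hN⟩ := hV.2.1.isUnit.exists_left_inv
      have : u = mvec N (mvec V u) := by rw [← mvec_mul, hN, mvec_one]
      rw [hVu] at this
      exact this.trans (by simp [mvec_eq])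
    apply hcon
    subst hu
    have : ∀ y, ‖mvec (Wpinv y) (0 : EuclideanSpace ℂ (Fin n))‖ ^ (p / (p - 1)) = 0 := fun y => by
      simp only [mvec_eq, map_zero, norm_zero]; exact Real.zero_rpow (by positivity)
    simp only [this]
    exact integrableOn_zero
  have hsum := (integrable_finsetSum Finset.univ fun i _ => hcol (stdVec i)).const_mul
    ((n : ℝ) ^ (p / (p - 1) - 1))
  refine Integrable.mono' hsum ?_ (Filter.Eventually.of_forall fun y => ?_)
  · exact ((measurable_matOpNorm _ hW.2.2.2.2.2.2).pow_const _).aestronglyMeasurable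
  · rw [Real.norm_of_nonneg (Real.rpow_nonneg (matOpNorm_nonneg _) _)]
    exact matOpNorm_rpow_le _ _ hq1

/-- The reducing operator dominates the inner average: `‖W^{1/p}(x) V‖ ^ p` is at most a constant
times the outer integrand of the `A_p` condition, because `‖W^{1/p}(x) V‖ = ‖V W^{1/p}(x)‖`. -/
lemma matOpNorm_mul_reducing_le {d n : ℕ} (p : ℝ) (hp : 1 < p) (c₁ c₂ : ℝ) (hc₂ : 0 < c₂)
    (Wp Wpinv : Rd d → Mat n) (hW : IsMatrixWeightPair Wp Wpinv) (b : Rd d) (r : ℝ) (V : Mat n)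
    (hV : IsReducingOp p c₁ c₂ Wpinv (cube b r) V) (x : Rd d) :
    matOpNorm (Wp x * V) ^ p ≤ c₂ ^ p * innerAvg p Wp Wpinv (cube b r) x ^ (p - 1) := by
  have hp1 : 0 < p - 1 := by linarith
  have hp0 : 0 < p := by linarith
  have hq : 0 < p / (p - 1) := by positivity
  have hI := integrableOn_of_reducing p hp c₁ c₂ Wp Wpinv hW (cube b r) V hV
  have hG := innerAvg_nonneg p Wp Wpinv (cube b r) x
  have key : matOpNorm (Wp x * V) ≤ c₂ * innerAvg p Wp Wpinv (cube b r) x ^ ((p - 1) / p) := by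
    rw [matOpNorm_mul_comm (hW.1 x) hV.1]
    refine ContinuousLinearMap.opNorm_le_bound _ (by positivity) fun v => ?_
    rw [← mvec_eq, mvec_mul]
    refine ((hV.2.2 (mvec (Wp x) v)).2).trans ?_
    rw [mul_assoc]
    refine mul_le_mul_of_nonneg_left ?_ hc₂.le
    have hpt : ∀ y, ‖mvec (Wpinv y) (mvec (Wp x) v)‖ ^ (p / (p - 1))
        ≤ ‖v‖ ^ (p / (p - 1)) * matOpNorm (Wp x * Wpinv y) ^ (p / (p - 1)) := fun y => by
      rw [← Real.mul_rpow (norm_nonneg _) (matOpNorm_nonneg _), mul_comm,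
        matOpNorm_mul_comm (hW.1 x) (hW.2.2.1 y), ← mvec_mul]
      exact Real.rpow_le_rpow (norm_nonneg _) (norm_mvec_le _ _) hq.le
    have hint := (integrableOn_inner p hp Wp Wpinv hW b r hI x).const_mul (‖v‖ ^ (p / (p - 1)))
    have hle : ⨍ y in cube b r, ‖mvec (Wpinv y) (mvec (Wp x) v)‖ ^ (p / (p - 1))
        ≤ ‖v‖ ^ (p / (p - 1)) * innerAvg p Wp Wpinv (cube b r) x := by
      rw [innerAvg, ← setAverage_const_mul]
      refine setAverage_mono (Integrable.mono' hint ?_ (Filter.Eventually.of_forall fun y => ?_))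
        hint hpt
      · exact ((measurable_mvec _ hW.2.2.2.2.2.2 _).pow_const _).aestronglyMeasurable
      · rw [Real.norm_of_nonneg (by positivity)]; exact hpt y
    calc _ ≤ (‖v‖ ^ (p / (p - 1)) * innerAvg p Wp Wpinv (cube b r) x) ^ ((p - 1) / p) :=
          Real.rpow_le_rpow (setAverage_nonneg fun y => by positivity) hle (by positivity)
      _ = _ := by
          rw [Real.mul_rpow (by positivity) hG, ← Real.rpow_mul (norm_nonneg _),
            show p / (p - 1) * ((p - 1) / p) = 1 by field_simp, Real.rpow_one, mul_comm]
  calc matOpNorm (Wp x * V) ^ p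
      ≤ (c₂ * innerAvg p Wp Wpinv (cube b r) x ^ ((p - 1) / p)) ^ p :=
        Real.rpow_le_rpow (matOpNorm_nonneg _) key hp0.le
    _ = _ := by
        rw [Real.mul_rpow hc₂.le (by positivity), ← Real.rpow_mul hG, div_mul_cancel₀ _ hp0.ne']

/-! ### The matrix reverse Hölder inequality -/

/-- Scalar reverse Hölder inequality for the weight `|W^{1/p} u| ^ p`. -/
lemma reverse_holder_direction {d n : ℕ} (p : ℝ) (hp : 1 < p) (Wp Wpinv : Rd d → Mat n)
    (hW : IsMatrixWeightPair Wp Wpinv) (A : ℝ) (hA : 1 ≤ A) (hAp : MatrixApBound p Wp Wpinv A)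
    (a : Rd d) (l : ℝ) (hl : 0 < l)
    (hI : IntegrableOn (fun y => matOpNorm (Wpinv y) ^ (p / (p - 1))) (cube a l))
    (hP : IntegrableOn (fun x => matOpNorm (Wp x) ^ p) (cube a l))
    (u : EuclideanSpace ℂ (Fin n)) (δ : ℝ) (hδ : δ = 1 / (3 * 2 ^ (d + 2) * 4 ^ (p - 1) * A))
    (hw' : IntegrableOn (fun x => (‖mvec (Wp x) u‖ ^ p) ^ (1 + δ)) (cube a l)) :
    ⨍ x in cube a l, (‖mvec (Wp x) u‖ ^ p) ^ (1 + δ)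
      ≤ 2 * (⨍ x in cube a l, ‖mvec (Wp x) u‖ ^ p) ^ (1 + δ) := by
  have hA0 : 0 < A := by linarith
  have hp0 : 0 < p := by linarith
  have hwm : Measurable fun x => ‖mvec (Wp x) u‖ ^ p :=
    (measurable_mvec _ hW.2.2.2.2.2.1 u).pow_const _
  refine reverse_holder _ hwm (fun x => by positivity) a l hl (1 / (2 ^ (p - 1) * A)) δ
    (by positivity) (by rw [hδ]; positivity) (by rw [hδ]; exact coefficient_small d p hp A hA)
    (integrableOn_weight p Wp Wpinv hW a l hp0 hP u) hw' ?_
  intro b r t hr ht hb hlt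
  have hu : u ≠ 0 := by
    -- The zero weight has no mass, so it has no cube of positive density.
    rintro rfl
    have : ∀ x, ‖mvec (Wp x) (0 : EuclideanSpace ℂ (Fin n))‖ ^ p = 0 := fun x => by
      simp only [mvec_eq, map_zero, norm_zero]; exact Real.zero_rpow hp0.ne'
    simp only [this, ENNReal.ofReal_zero] at hlt
    rw [withDensity_apply _ (measurableSet_cube b r), lintegral_zero] at hlt
    exact absurd hlt _root_.not_lt_zero
  have hP' := hP.mono_set hb
  have hI' := hI.mono_set hb
  exact half_measure_of_Ap p hp _ hwm
    (fun x => Real.rpow_pos_of_pos (norm_mvec_pos Wp Wpinv hW hu x) _) b r hr A hA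
    (integrableOn_weight p Wp Wpinv hW b r hp0 hP' u)
    (integrableOn_dual p hp Wp Wpinv hW b r hI' hu)
    (scalar_Ap p hp Wp Wpinv hW b r hI' hP' A (hAp _ ⟨b, r, hr, rfl⟩) hu) t ht hlt

/-- Proposition 2.7: sharp reverse Hölder type estimate for `‖W^{1/p}(x) V_{Q,p}‖`. -/
theorem stmt17 (n d : ℕ) (p : ℝ) (hp : 1 < p) (c₁ c₂ : ℝ) (hc₁ : 0 < c₁) (hc₂ : 0 < c₂) :
    ∃ c > 0, ∃ C > 0, ∀ Wp Wpinv : Rd d → Mat n, IsMatrixWeightPair Wp Wpinv →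
      ∀ A : ℝ, 1 ≤ A → MatrixApBound p Wp Wpinv A →
      ∀ s : ℝ, s = 1 + 1 / (c * A) →
      ∀ Q : Set (Rd d), IsCube Q →
      ∀ V : Mat n, IsReducingOp p c₁ c₂ Wpinv Q V →
        (⨍ x in Q, matOpNorm (Wp x * V) ^ (s * p)) ^ (1 / s) ≤ C * A := by
  refine ⟨3 * 2 ^ (d + 2) * 4 ^ (p - 1), by positivity, 2 * ((n : ℝ) + 1) ^ p * c₂ ^ p,
    by positivity, ?_⟩
  intro Wp Wpinv hW A hA hAp s hs Q hQ V hV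
  obtain ⟨a, l, hl, rfl⟩ := hQ
  change IsReducingOp p c₁ c₂ Wpinv (cube a l) V at hV
  change (⨍ x in cube a l, matOpNorm (Wp x * V) ^ (s * p)) ^ (1 / s) ≤ _
  have hp0 : 0 < p := by linarith
  have hA0 : 0 < A := by linarith
  set δ : ℝ := 1 / (3 * 2 ^ (d + 2) * 4 ^ (p - 1) * A) with hδ
  have hδ0 : 0 < δ := by positivity
  have hs1 : 1 < s := by linarith
  have hs0 : 0 < s := by linarith
  have hsp : 1 ≤ s * p := by nlinarith
  have hN : ∀ x, 0 ≤ matOpNorm (Wp x * V) := fun x => matOpNorm_nonneg _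
  have hNm : Measurable fun x => matOpNorm (Wp x * V) :=
    measurable_matOpNorm _ (measurable_mul_entry _ _ hW.2.2.2.2.2.1 fun _ _ => measurable_const)
  by_cases hint : IntegrableOn (fun x => matOpNorm (Wp x * V) ^ (s * p)) (cube a l)
  swap
  · -- The Bochner integral of a non-integrable function is `0`.
    rw [setAverage_eq, integral_undef hint, smul_zero, Real.zero_rpow (by positivity)]
    positivity
  have hI := integrableOn_of_reducing p hp c₁ c₂ Wp Wpinv hW (cube a l) V hV
  have hcfin : IsFiniteMeasure (volume.restrict (cube a l)) :=
    ⟨by rw [Measure.restrict_apply_univ]; exact (volume_cube_ne_top a l).lt_top⟩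
  have hNp : IntegrableOn (fun x => matOpNorm (Wp x * V) ^ p) (cube a l) := by
    refine Integrable.mono' (hint.add (integrable_const (1 : ℝ)))
      (hNm.pow_const _).aestronglyMeasurable (Filter.Eventually.of_forall fun x => ?_)
    rw [Real.norm_of_nonneg (Real.rpow_nonneg (hN x) _), Pi.add_apply]
    rcases le_total 1 (matOpNorm (Wp x * V)) with h | h
    · have := Real.rpow_le_rpow_of_exponent_le h (show p ≤ s * p by nlinarith)
      linarith
    · have := Real.rpow_le_one (hN x) h hp0.le
      have := Real.rpow_nonneg (hN x) (s * p)
      linarith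
  have hP : IntegrableOn (fun x => matOpNorm (Wp x) ^ p) (cube a l) := by
    obtain ⟨N, hVN⟩ := hV.2.1.isUnit.exists_right_inv
    refine Integrable.mono' (hNp.mul_const (matOpNorm N ^ p))
      ((measurable_matOpNorm _ hW.2.2.2.2.2.1).pow_const _).aestronglyMeasurable
      (Filter.Eventually.of_forall fun x => ?_)
    rw [Real.norm_of_nonneg (Real.rpow_nonneg (matOpNorm_nonneg _) _),
      ← Real.mul_rpow (hN x) (matOpNorm_nonneg _)]
    refine Real.rpow_le_rpow (matOpNorm_nonneg _) ?_ hp0.le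
    have : Wp x = Wp x * V * N := by rw [mul_assoc, hVN, mul_one]
    conv_lhs => rw [this]
    exact matOpNorm_mul_le _ _
  have hout := integrableOn_outer p hp Wp Wpinv hW a l hI hP
  have hL : ⨍ x in cube a l, matOpNorm (Wp x * V) ^ p ≤ c₂ ^ p * A := by
    refine (setAverage_mono hNp (hout.const_mul (c₂ ^ p)) fun x =>
      matOpNorm_mul_reducing_le p hp c₁ c₂ hc₂ Wp Wpinv hW a l V hV x).trans ?_
    rw [setAverage_const_mul]
    exact mul_le_mul_of_nonneg_left (hAp _ ⟨a, l, hl, rfl⟩) (by positivity)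
  -- The columns of `W^{1/p} V` are controlled by the scalar inequality.
  have hcolle : ∀ (i : Fin n) x, ‖mvec (Wp x) (mvec V (stdVec i))‖ ≤ matOpNorm (Wp x * V) :=
    fun i x => by
      rw [← mvec_mul]
      simpa [norm_stdVec] using norm_mvec_le (Wp x * V) (stdVec i)
  have hpow : ∀ (i : Fin n) x, (‖mvec (Wp x) (mvec V (stdVec i))‖ ^ p) ^ (1 + δ)
      = ‖mvec (Wp x) (mvec V (stdVec i))‖ ^ (s * p) := fun i x => by
    rw [← Real.rpow_mul (norm_nonneg _), ← hs, mul_comm]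
  have hcolint : ∀ i : Fin n,
      IntegrableOn (fun x => ‖mvec (Wp x) (mvec V (stdVec i))‖ ^ (s * p)) (cube a l) := fun i => by
    refine Integrable.mono' hint
      ((measurable_mvec _ hW.2.2.2.2.2.1 _).pow_const _).aestronglyMeasurable
      (Filter.Eventually.of_forall fun x => ?_)
    rw [Real.norm_of_nonneg (by positivity)]
    exact Real.rpow_le_rpow (norm_nonneg _) (hcolle i x) (by linarith)
  have hcol : ∀ i : Fin n, ⨍ x in cube a l, ‖mvec (Wp x) (mvec V (stdVec i))‖ ^ (s * p)
      ≤ 2 * (c₂ ^ p * A) ^ s := fun i => by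
    have h := reverse_holder_direction p hp Wp Wpinv hW A hA hAp a l hl hI hP
      (mvec V (stdVec i)) δ hδ (by simp only [hpow]; exact hcolint i)
    simp only [hpow] at h
    rw [← hs] at h
    refine h.trans ?_
    gcongr
    · exact setAverage_nonneg fun x => by positivity
    · refine le_trans (setAverage_mono
        (integrableOn_weight p Wp Wpinv hW a l hp0 hP (mvec V (stdVec i))) hNp fun x => ?_) hL
      exact Real.rpow_le_rpow (norm_nonneg _) (hcolle i x) hp0.le
  have hsum : ⨍ x in cube a l, matOpNorm (Wp x * V) ^ (s * p)
      ≤ (n : ℝ) ^ (s * p - 1) * (n * (2 * (c₂ ^ p * A) ^ s)) := by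
    have h1 : ⨍ x in cube a l, matOpNorm (Wp x * V) ^ (s * p) ≤ ⨍ x in cube a l,
        (n : ℝ) ^ (s * p - 1) * ∑ i, ‖mvec (Wp x) (mvec V (stdVec i))‖ ^ (s * p) := by
      refine setAverage_mono hint
        ((integrable_finsetSum Finset.univ fun i _ => hcolint i).const_mul _) fun x => ?_
      simpa only [mvec_mul] using matOpNorm_rpow_le (Wp x * V) (s * p) hsp
    refine h1.trans ?_
    rw [setAverage_const_mul]
    refine mul_le_mul_of_nonneg_left ?_ (by positivity)
    rw [setAverage_eq, integral_finsetSum _ fun i _ => hcolint i, Finset.smul_sum]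
    calc _ ≤ ∑ _i : Fin n, 2 * (c₂ ^ p * A) ^ s :=
          Finset.sum_le_sum fun i _ => by rw [← setAverage_eq]; exact hcol i
      _ = _ := by simp
  have hfin : (n : ℝ) ^ (s * p - 1) * (n * (2 * (c₂ ^ p * A) ^ s))
      ≤ (2 * ((n : ℝ) + 1) ^ p * c₂ ^ p * A) ^ s := by
    have hn1 : (n : ℝ) ^ (s * p - 1) * n ≤ (((n : ℝ) + 1) ^ p) ^ s := by
      calc (n : ℝ) ^ (s * p - 1) * n ≤ ((n : ℝ) + 1) ^ (s * p - 1) * ((n : ℝ) + 1) := by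
            gcongr <;> linarith
        _ = _ := by
            rw [← Real.rpow_add_one (by positivity), sub_add_cancel, ← Real.rpow_mul (by positivity),
              mul_comm]
    have h2 : (2 : ℝ) ≤ 2 ^ s := by
      conv_lhs => rw [← Real.rpow_one 2]
      exact Real.rpow_le_rpow_of_exponent_le (by norm_num) hs1.le
    rw [mul_assoc (2 * ((n : ℝ) + 1) ^ p),
      Real.mul_rpow (x := 2 * ((n : ℝ) + 1) ^ p) (by positivity) (by positivity),
      Real.mul_rpow (x := 2) (by norm_num) (by positivity)]
    calc _ = 2 * ((n : ℝ) ^ (s * p - 1) * n) * (c₂ ^ p * A) ^ s := by ring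
      _ ≤ _ := by gcongr
  calc (⨍ x in cube a l, matOpNorm (Wp x * V) ^ (s * p)) ^ (1 / s)
      ≤ ((2 * ((n : ℝ) + 1) ^ p * c₂ ^ p * A) ^ s) ^ (1 / s) :=
        Real.rpow_le_rpow (setAverage_nonneg fun x => Real.rpow_nonneg (hN x) _)
          (hsum.trans hfin) (by positivity)
    _ = _ := by
        rw [← Real.rpow_mul (by positivity), mul_one_div_cancel hs0.ne', Real.rpow_one]
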